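/- Let k be a positive integer such that there exists no binary extremal doubly even self-dual code of length 24k (a condition known to hold for every k ≥ 154). Then the minimum Lee weight of every self-dual Z4-code of length 24k is neither 8k+2 nor 8k+4; combined with Rains's bound d_L ≤ 8k+4 for such codes, the minimum Lee weight is at most 8k. -/

import Mathlib

open Finset

namespace Z4Note

variable {ι : Type*} [Fintype ι]

/-- Hamming weight of a binary vector. -/
def hWt (x : ι → ZMod 2) : ℕ := (Finset.univ.filter fun i => x i ≠ 0).card

/-- Lee value of an element of `ZMod 4`:  0 ↦ 0, 1 ↦ 1, 2 ↦ 2, 3 ↦ 1. -/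
def leeVal (a : ZMod 4) : ℕ := min a.val (4 - a.val)

/-- Lee weight `n₁(x) + 2 n₂(x) + n₃(x)`. -/
def leeWt (x : ι → ZMod 4) : ℕ := ∑ i, leeVal (x i)

/-- Euclidean weight `n₁(x) + 4 n₂(x) + n₃(x)`. -/
def eucWt (x : ι → ZMod 4) : ℕ := ∑ i, (leeVal (x i)) ^ 2

/-- Number of coordinates of `x` equal to `a`. -/
def nCount (a : ZMod 4) (x : ι → ZMod 4) : ℕ := (Finset.univ.filter fun i => x i = a).card

/-- Dual of a `ZMod 4`-code (as a set), w.r.t. the standard inner product. -/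
def dualZ4 (C : Set (ι → ZMod 4)) : Set (ι → ZMod 4) :=
  {x | ∀ y ∈ C, ∑ i, x i * y i = 0}

/-- Dual of a binary code (as a set), w.r.t. the standard inner product. -/
def dual2 (C : Set (ι → ZMod 2)) : Set (ι → ZMod 2) :=
  {x | ∀ y ∈ C, ∑ i, x i * y i = 0}

/-- A `ZMod 4`-code is self-dual if it equals its dual. -/
def SelfDualZ4 (C : Submodule (ZMod 4) (ι → ZMod 4)) : Prop :=
  (C : Set (ι → ZMod 4)) = dualZ4 (C : Set (ι → ZMod 4))

/-- A binary code is self-dual if it equals its dual. -/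
def SelfDual2 (D : Submodule (ZMod 2) (ι → ZMod 2)) : Prop :=
  (D : Set (ι → ZMod 2)) = dual2 (D : Set (ι → ZMod 2))

/-- Coordinatewise reduction modulo 2. -/
def res2 (x : ι → ZMod 4) : ι → ZMod 2 :=
  fun i => ZMod.castHom (by norm_num : (2:ℕ) ∣ 4) (ZMod 2) (x i)

/-- The residue code `C⁽¹⁾ = {c mod 2 : c ∈ C}`. -/
def residue (C : Set (ι → ZMod 4)) : Set (ι → ZMod 2) := res2 '' C

/-- Minimum Lee weight among nonzero codewords. -/
noncomputable def minLee (C : Set (ι → ZMod 4)) : ℕ := sInf {d | ∃ x ∈ C, x ≠ 0 ∧ leeWt x = d}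

/-- Minimum Euclidean weight among nonzero codewords. -/
noncomputable def minEuc (C : Set (ι → ZMod 4)) : ℕ := sInf {d | ∃ x ∈ C, x ≠ 0 ∧ eucWt x = d}

/-- Minimum Hamming weight among nonzero codewords of a binary code. -/
noncomputable def minHam (C : Set (ι → ZMod 2)) : ℕ := sInf {d | ∃ x ∈ C, x ≠ 0 ∧ hWt x = d}

/-- A binary code is doubly even if all weights are divisible by 4. -/
def DoublyEven (C : Set (ι → ZMod 2)) : Prop := ∀ x ∈ C, 4 ∣ hWt x

/-- A binary code is singly even if some codeword has weight not divisible by 4. -/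
def SinglyEven (C : Set (ι → ZMod 2)) : Prop := ∃ x ∈ C, ¬ 4 ∣ hWt x

/-- A self-dual `ZMod 4`-code is Type II if all Euclidean weights are divisible by 8. -/
def TypeII (C : Set (ι → ZMod 4)) : Prop := ∀ x ∈ C, 8 ∣ eucWt x

/-- The doubly even subcode of a binary code. -/
def evenSubcode (D : Set (ι → ZMod 2)) : Set (ι → ZMod 2) := {x ∈ D | 4 ∣ hWt x}

/-- The shadow `S = D₀^⊥ \ D` of a binary code. -/
def shadow (D : Set (ι → ZMod 2)) : Set (ι → ZMod 2) := dual2 (evenSubcode D) \ D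

/-- A binary singly even self-dual code is s-extremal if equality holds in the
Bachoc–Gaborit bound relating the minimum weight of the code and of its shadow. -/
def SExtremal (D : Submodule (ZMod 2) (ι → ZMod 2)) : Prop :=
  SelfDual2 D ∧ SinglyEven (D : Set (ι → ZMod 2)) ∧
  ((¬ (Fintype.card ι % 24 = 22 ∧
        minHam (D : Set (ι → ZMod 2)) = 4 * (Fintype.card ι / 24) + 6)) →
      minHam (shadow (D : Set (ι → ZMod 2))) + 2 * minHam (D : Set (ι → ZMod 2)) =
        Fintype.card ι / 2 + 4) ∧
  ((Fintype.card ι % 24 = 22 ∧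
        minHam (D : Set (ι → ZMod 2)) = 4 * (Fintype.card ι / 24) + 6) →
      minHam (shadow (D : Set (ι → ZMod 2))) + 2 * minHam (D : Set (ι → ZMod 2)) =
        Fintype.card ι / 2 + 8)

/-- Equivalence of `ZMod 4`-codes: coordinate permutation together with sign changes. -/
def Z4Equiv (C C' : Set (ι → ZMod 4)) : Prop :=
  ∃ σ : Equiv.Perm ι, ∃ ε : ι → ZMod 4, (∀ i, ε i = 1 ∨ ε i = -1) ∧
    C' = (fun x => fun i => ε i * x (σ i)) '' C

/-- Covering radius of a binary code. -/
noncomputable def covRad (C : Set (ι → ZMod 2)) : ℕ :=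
  sInf {R | ∀ v : ι → ZMod 2, ∃ c ∈ C, hWt (v - c) ≤ R}

/-- Entry `(i,j)` of the circulant matrix with first row `r`. -/
def circEntry {m : ℕ} (r : Fin m → ZMod 4) (i j : Fin m) : ZMod 4 := r (j - i)

/-- Entry `(i,j)` of the negacirculant matrix with first row `r`. -/
def negaEntry {m : ℕ} (r : Fin m → ZMod 4) (i j : Fin m) : ZMod 4 :=
  if i.val ≤ j.val then r (j - i) else - r (j - i)

/-- The bordered part `B` of the generator matrix of a bordered double circulant code. -/
def bdcB {m : ℕ} (α β γ : ZMod 4) (r : Fin m → ZMod 4) :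
    Fin (m+1) → Fin (m+1) → ZMod 4 :=
  Fin.cases (Fin.cases α fun _ => β) (fun i' => Fin.cases γ fun j' => circEntry r i' j')

/-- Row `i` of the generator matrix `(I | B)` of a bordered double circulant code. -/
def bdcRow {m : ℕ} (α β γ : ZMod 4) (r : Fin m → ZMod 4) (i : Fin (m+1)) :
    (Fin (m+1) ⊕ Fin (m+1)) → ZMod 4 :=
  Sum.elim (fun j => if j = i then 1 else 0) (bdcB α β γ r i)

/-- The bordered double circulant code of length `2(m+1)`. -/
def bdcCode {m : ℕ} (α β γ : ZMod 4) (r : Fin m → ZMod 4) :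
    Submodule (ZMod 4) ((Fin (m+1) ⊕ Fin (m+1)) → ZMod 4) :=
  Submodule.span (ZMod 4) (Set.range (bdcRow α β γ r))

/-- The block matrix `[[A, B], [-Bᵀ, Aᵀ]]` built from negacirculant `A`, `B`. -/
def fourNegaM {n : ℕ} (a b : Fin n → ZMod 4) :
    (Fin n ⊕ Fin n) → (Fin n ⊕ Fin n) → ZMod 4
  | Sum.inl i, Sum.inl j => negaEntry a i j
  | Sum.inl i, Sum.inr j => negaEntry b i j
  | Sum.inr i, Sum.inl j => - negaEntry b j i
  | Sum.inr i, Sum.inr j => negaEntry a j i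

/-- Row `i` of the generator matrix `(I | M)` of a four-negacirculant code. -/
def fourNegaRow {n : ℕ} (a b : Fin n → ZMod 4) (i : Fin n ⊕ Fin n) :
    ((Fin n ⊕ Fin n) ⊕ (Fin n ⊕ Fin n)) → ZMod 4 :=
  Sum.elim (fun j => if j = i then 1 else 0) (fourNegaM a b i)

/-- The four-negacirculant code of length `4n`. -/
def fourNegaCode {n : ℕ} (a b : Fin n → ZMod 4) :
    Submodule (ZMod 4) (((Fin n ⊕ Fin n) ⊕ (Fin n ⊕ Fin n)) → ZMod 4) :=
  Submodule.span (ZMod 4) (Set.range (fourNegaRow a b))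

end Z4Note

namespace Z4Note

section seriesPart

open PowerSeries

/-- `(1 + X)^4`. -/
noncomputable def serA : PowerSeries ℚ := (1 + X) ^ 4
/-- `(1 - X)^4`. -/
noncomputable def serB : PowerSeries ℚ := (1 - X) ^ 4
/-- `1 / (1 + X^2)`. -/
noncomputable def serV : PowerSeries ℚ := (1 + X ^ 2)⁻¹
/-- `1 / (1 - X^2)`. -/
noncomputable def serU : PowerSeries ℚ := (1 - X ^ 2)⁻¹

lemma serV_mul : (1 + X ^ 2) * serV = 1 := by
  unfold serV
  apply PowerSeries.mul_inv_cancel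
  simp

lemma serU_mul : (1 - X ^ 2) * serU = 1 := by
  unfold serU
  apply PowerSeries.mul_inv_cancel
  simp

lemma coeff_exact (G : PowerSeries ℚ) (i : ℕ) :
    coeff (i + 1) (G ^ i * (G - X * d⁄dX ℚ G)) = 0 := by
  have h1 : d⁄dX ℚ (G ^ (i + 1)) = ((i : ℚ) + 1) • (G ^ i * d⁄dX ℚ G) := by
    rw [Derivation.leibniz_pow]
    simp only [Nat.add_sub_cancel, smul_eq_mul]
    rw [← Nat.cast_smul_eq_nsmul ℚ]
    push_cast
    rfl
  have h2 := congrArg (coeff i) h1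
  rw [coeff_derivative, coeff_smul, smul_eq_mul] at h2
  have h3 : coeff (i + 1) (G ^ (i + 1)) = coeff i (G ^ i * d⁄dX ℚ G) := by
    have : ((i : ℚ) + 1) ≠ 0 := by positivity
    apply mul_left_cancel₀ this
    linarith
  have h4 : G ^ i * (G - X * d⁄dX ℚ G) = G ^ (i + 1) - X * (G ^ i * d⁄dX ℚ G) := by ring
  rw [h4, map_sub, coeff_succ_X_mul, h3, sub_self]

lemma deriv_serV : d⁄dX ℚ serV = - serV ^ 2 * (2 * X) := by
  have h := congrArg (d⁄dX ℚ) serV_mul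
  have h2 : d⁄dX ℚ ((1 : PowerSeries ℚ) + X ^ 2) = 2 * X := by
    rw [map_add, Derivation.leibniz_pow]
    simp [derivative_X]
  rw [Derivation.leibniz, h2] at h
  simp only [smul_eq_mul, Derivation.map_one_eq_zero] at h
  have h3 := serV_mul
  linear_combination serV * h - (d⁄dX ℚ serV) * h3

lemma deriv_serA : d⁄dX ℚ serA = 4 * (1 + X) ^ 3 := by
  unfold serA
  rw [Derivation.leibniz_pow, map_add]
  simp [derivative_X]

lemma coeff_base (i : ℕ) :
    coeff (i + 1) (serA ^ i * (1 - X ^ 2) ^ 3 * serV ^ (i + 2)) = 0 := by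
  rw [← coeff_exact (serA * serV) i]
  congr 1
  rw [Derivation.leibniz, deriv_serV, deriv_serA]
  simp only [smul_eq_mul]
  have h3 := serV_mul
  have : (1 - X ^ 2) ^ 3 * serV ^ 2 = serA * serV -
      X * (serA * (-serV ^ 2 * (2 * X)) + serV * (4 * (1 + X) ^ 3)) := by
    unfold serA
    linear_combination ((1+X)^4 * serV - 4 * X * (1+X)^3 * serV) * h3
  rw [← this]
  ring

lemma coeff_form (j : ℕ) : ∀ i : ℕ,
    coeff (i + j + 1) (serA ^ i * serB ^ j * (1 - X ^ 2) ^ 3 * serV ^ (i + j + 2)) = 0 := by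
  induction j with
  | zero => intro i; simpa using coeff_base i
  | succ j ih =>
    intro i
    have h : serA ^ i * serB ^ (j + 1) * (1 - X ^ 2) ^ 3 * serV ^ (i + (j + 1) + 2)
        = serA ^ (i + 1) * serB ^ j * (1 - X ^ 2) ^ 3 * serV ^ (i + 1 + j + 2)
        - X * (C (8 : ℚ) * (serA ^ i * serB ^ j * (1 - X ^ 2) ^ 3 * serV ^ (i + j + 2))) := by
      have e : serB = serA - 8 * X * (1 + X ^ 2) := by unfold serA serB; ring
      have e8 : (C (8 : ℚ) : PowerSeries ℚ) = 8 := map_ofNat C 8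
      rw [e8, show i + (j + 1) + 2 = i + j + 3 by ring, show i + 1 + j + 2 = i + j + 3 by ring]
      rw [pow_succ serB]
      nth_rewrite 2 [e]
      have h3 := serV_mul
      linear_combination (-8 * X * serA ^ i * serB ^ j * (1 - X ^ 2) ^ 3 * serV ^ (i + j + 2)) * h3
    rw [h, map_sub, show i + (j + 1) + 1 = (i + j + 1) + 1 by ring, coeff_succ_X_mul, coeff_C_mul,
      ih i]
    have := ih (i + 1)
    rw [show i + 1 + j + 1 = (i + j + 1) + 1 by ring] at this
    rw [this]
    simp

/-- The test series. -/
noncomputable def serE (k : ℕ) : PowerSeries ℚ :=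
  serA * serU ^ (4 * k + 4) * serV ^ (4 * k - 1)

lemma test_middle (k p q : ℕ) (hk : 0 < k) (h1 : p + q + 2 = 24 * k) (hq : 4 ∣ q + 1)
    (hq2 : 4 * k + 8 ≤ q + 1) (hp2 : 4 * k + 8 ≤ p + 1) :
    coeff (4 * k - 2) ((1 + X) ^ p * (1 - X) ^ q * serE k) = 0 := by
  obtain ⟨j, hj⟩ := hq
  obtain ⟨j', rfl⟩ : ∃ j', j = k + 2 + j' := ⟨j - (k + 2), by omega⟩
  obtain ⟨i, hi⟩ : ∃ i, i + j' = 4 * k - 4 := ⟨4 * k - 4 - j', by omega⟩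
  have hq' : q = 4 * j' + (4 * k + 7) := by omega
  have hp' : p = 4 * i + (4 * k + 7) := by omega
  have := coeff_form j' (i + 1)
  rw [show i + 1 + j' + 1 = 4 * k - 2 by omega, show i + 1 + j' + 2 = 4 * k - 1 by omega] at this
  rw [← this]
  congr 1
  unfold serE
  rw [hq', hp', pow_add (1 + X), pow_add (1 - X), pow_mul, pow_mul]
  change serA ^ i * _ * (serB ^ j' * _) * _ = _
  have e : ((1 + X) ^ (4 * k + 7) * (1 - X) ^ (4 * k + 7) * serU ^ (4 * k + 4) : PowerSeries ℚ)
      = (1 - X ^ 2) ^ 3 := by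
    rw [← mul_pow, show ((1 + X) * (1 - X) : PowerSeries ℚ) = 1 - X ^ 2 by ring,
      show 4 * k + 7 = (4 * k + 4) + 3 by ring, pow_add, mul_right_comm, ← mul_pow, serU_mul]
    simp
  calc _ = serA ^ (i + 1) * serB ^ j' *
        ((1 + X) ^ (4 * k + 7) * (1 - X) ^ (4 * k + 7) * serU ^ (4 * k + 4)) *
          serV ^ (4 * k - 1) := by ring
    _ = _ := by rw [e]

/-- `1/(1-X^4)`. -/
noncomputable def serQ : PowerSeries ℚ := PowerSeries.mk fun n => if 4 ∣ n then 1 else 0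

lemma serQ_mul : (1 - X ^ 4) * serQ = 1 := by
  ext n
  rw [sub_mul, one_mul, map_sub, coeff_X_pow_mul', coeff_one]
  unfold serQ
  simp only [coeff_mk]
  by_cases h : 4 ≤ n
  · have : (4 ∣ n - 4) ↔ (4 ∣ n) := by omega
    simp [h, this]; omega
  · simp only [h, if_false]
    have : 4 ∣ n ↔ n = 0 := by omega
    simp [this]

/-- nonnegative coefficients -/
def NN (f : PowerSeries ℚ) : Prop := ∀ n, 0 ≤ coeff n f

lemma NN.mul {f g : PowerSeries ℚ} (hf : NN f) (hg : NN g) : NN (f * g) := by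
  intro n
  rw [coeff_mul]
  exact Finset.sum_nonneg fun p _ => mul_nonneg (hf _) (hg _)

lemma NN.add {f g : PowerSeries ℚ} (hf : NN f) (hg : NN g) : NN (f + g) := by
  intro n
  rw [map_add]
  exact add_nonneg (hf _) (hg _)

lemma NN_one : NN 1 := by
  intro n; rw [coeff_one]; split_ifs <;> norm_num

lemma NN_X : NN X := by
  intro n; rw [coeff_X]; split_ifs <;> norm_num

lemma NN.pow {f : PowerSeries ℚ} (hf : NN f) (r : ℕ) : NN (f ^ r) := by
  induction r with
  | zero => simpa using NN_one
  | succ r ih => rw [pow_succ]; exact ih.mul hf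

lemma NN.coeff_mul_ge {f g : PowerSeries ℚ} (hf : NN f) (hg : NN g) (a b : ℕ) :
    coeff a f * coeff b g ≤ coeff (a + b) (f * g) := by
  rw [coeff_mul]
  exact Finset.single_le_sum (f := fun p : ℕ × ℕ => coeff p.1 f * coeff p.2 g)
    (fun p _ => mul_nonneg (hf _) (hg _)) (a := (a, b)) (by simp)

lemma NN_serQ : NN serQ := by
  intro n; unfold serQ; rw [coeff_mk]; split_ifs <;> norm_num

lemma serE_eq (k : ℕ) (hk : 0 < k) :
    serE k = (1 + X) ^ 4 * (1 + X ^ 2) ^ 5 * (serQ * serQ ^ (4 * k + 3)) := by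
  have hV := serV_mul
  have hU := serU_mul
  have hQ := serQ_mul
  have hQ2 : serQ = serU * serV := by
    have : (1 - X ^ 4 : PowerSeries ℚ) = (1 - X ^ 2) * (1 + X ^ 2) := by ring
    rw [this] at hQ
    calc serQ = ((1 - X ^ 2) * serU) * ((1 + X ^ 2) * serV) * serQ := by rw [hV, hU]; ring
      _ = serU * serV * ((1 - X ^ 2) * (1 + X ^ 2) * serQ) := by ring
      _ = _ := by rw [hQ, mul_one]
  rw [← pow_succ', hQ2, mul_pow, show 4 * k + 3 + 1 = (4 * k - 1) + 5 by omega, pow_add serV]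
  unfold serE serA
  rw [show 4 * k + 4 = (4 * k - 1) + 5 by omega]
  calc _ = (1 + X) ^ 4 * (serU ^ (4 * k - 1 + 5) * serV ^ (4 * k - 1)) * 1 ^ 5 := by ring
    _ = (1 + X) ^ 4 * (serU ^ (4 * k - 1 + 5) * serV ^ (4 * k - 1)) *
          ((1 + X ^ 2) * serV) ^ 5 := by rw [hV]
    _ = _ := by ring

lemma test_const (k : ℕ) (hk : 0 < k) : 0 < coeff (4 * k - 2) (serE k) := by
  rw [serE_eq k hk]
  have hN : NN ((1 + X) ^ 4 * (1 + X ^ 2) ^ 5) :=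
    ((NN_one.add NN_X).pow 4).mul ((NN_one.add (NN_X.pow 2)).pow 5)
  have hM := NN_serQ.mul (NN_serQ.pow (4 * k + 3))
  have h1 := hN.coeff_mul_ge hM 2 (4 * k - 4)
  rw [show 2 + (4 * k - 4) = 4 * k - 2 by omega] at h1
  refine lt_of_lt_of_le (mul_pos ?_ ?_) h1
  · have h2 := ((NN_one.add NN_X).pow 4).coeff_mul_ge ((NN_one.add (NN_X.pow 2)).pow 5) 2 0
    refine lt_of_lt_of_le ?_ h2
    apply mul_pos
    · rw [show (1 + X : PowerSeries ℚ) ^ 4 = 1 + (4 : ℚ) • X + (6 : ℚ) • X ^ 2 + (4 : ℚ) • X ^ 3 + X ^ 4 by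
        simp only [smul_eq_C_mul]
        rw [show (C (4 : ℚ) : PowerSeries ℚ) = 4 from map_ofNat C 4,
          show (C (6 : ℚ) : PowerSeries ℚ) = 6 from map_ofNat C 6]
        ring]
      simp [coeff_X_pow, coeff_X, coeff_one]
    · simp
  · have h2 := NN_serQ.coeff_mul_ge (NN_serQ.pow (4 * k + 3)) (4 * k - 4) 0
    refine lt_of_lt_of_le ?_ h2
    apply mul_pos
    · unfold serQ
      rw [coeff_mk, if_pos (by omega)]
      norm_num
    · simp [serQ]

/-- The operator `4 ∂_a ∂_b`. -/
noncomputable def opT (n : ℚ) (f : PowerSeries ℚ) : PowerSeries ℚ :=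
  (C (n - 1)) * (C n * f - (1 + X) * d⁄dX ℚ f) +
    (1 - X) * d⁄dX ℚ (C n * f - (1 + X) * d⁄dX ℚ f)

lemma opT_add (n : ℚ) (f g : PowerSeries ℚ) : opT n (f + g) = opT n f + opT n g := by
  unfold opT
  simp only [map_add, mul_add, map_sub]
  ring

lemma opT_sum {α : Type*} (n : ℚ) (s : Finset α) (f : α → PowerSeries ℚ) :
    opT n (∑ i ∈ s, f i) = ∑ i ∈ s, opT n (f i) := by
  classical
  induction s using Finset.induction_on with
  | empty => simp [opT]
  | insert a s ha ih => rw [Finset.sum_insert ha, Finset.sum_insert ha, opT_add, ih]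

lemma deriv_C_mul (c : ℚ) (f : PowerSeries ℚ) : d⁄dX ℚ (C c * f) = C c * d⁄dX ℚ f := by
  rw [← smul_eq_C_mul, ← smul_eq_C_mul, Derivation.map_smul]

lemma C_two : (C (2 : ℚ) : PowerSeries ℚ) = 2 := map_ofNat C 2

lemma C_four : (C (4 : ℚ) : PowerSeries ℚ) = 4 := map_ofNat C 4

lemma deriv_a (p : ℕ) : (1 + X) * d⁄dX ℚ ((1 + X) ^ p) = C (p : ℚ) * (1 + X) ^ p := by
  rw [Derivation.leibniz_pow, map_add]
  cases p with
  | zero => simp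
  | succ p => simp [derivative_X, smul_eq_mul]; ring

lemma deriv_b (p : ℕ) : (1 - X) * d⁄dX ℚ ((1 - X) ^ p) = - C (p : ℚ) * (1 - X) ^ p := by
  rw [Derivation.leibniz_pow, map_sub]
  cases p with
  | zero => simp
  | succ p => simp [derivative_X, smul_eq_mul]; ring

lemma opT_a (p : ℕ) : opT p ((1 + X) ^ p) = 0 := by
  unfold opT
  rw [deriv_a]
  simp

lemma opT_b (q : ℕ) (hq : 0 < q) : opT q ((1 - X) ^ q) = 0 := by
  obtain ⟨q, rfl⟩ : ∃ q', q = q' + 1 := ⟨q - 1, by omega⟩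
  have e : C ((q + 1 : ℕ) : ℚ) * (1 - X) ^ (q + 1) - (1 + X) * d⁄dX ℚ ((1 - X) ^ (q + 1))
      = C (2 * ((q + 1 : ℕ) : ℚ)) * (1 - X) ^ q := by
    rw [Derivation.leibniz_pow, map_sub]
    simp [derivative_X, smul_eq_mul, C_two]
    ring
  unfold opT
  rw [e, deriv_C_mul, mul_left_comm (1 - X), deriv_b]
  simp
  ring

lemma deriv_succ_a (p : ℕ) : d⁄dX ℚ ((1 + X) ^ (p + 1)) = ((p : PowerSeries ℚ) + 1) * (1 + X) ^ p := by
  rw [Derivation.leibniz_pow, map_add]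
  simp [derivative_X, smul_eq_mul]

lemma deriv_succ_b (p : ℕ) : d⁄dX ℚ ((1 - X) ^ (p + 1)) = - (((p : PowerSeries ℚ) + 1) * (1 - X) ^ p) := by
  rw [Derivation.leibniz_pow, map_sub]
  simp [derivative_X, smul_eq_mul]

lemma opT_ab (n p q : ℕ) (h : n = p + q + 2) :
    opT n ((1 + X) ^ (p + 1) * (1 - X) ^ (q + 1)) =
      C (4 * ((p : ℚ) + 1) * (q + 1)) * ((1 + X) ^ p * (1 - X) ^ q) := by
  subst h
  have e : C ((p + q + 2 : ℕ) : ℚ) * ((1 + X) ^ (p + 1) * (1 - X) ^ (q + 1)) -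
      (1 + X) * d⁄dX ℚ ((1 + X) ^ (p + 1) * (1 - X) ^ (q + 1))
      = C (2 * ((q : ℚ) + 1)) * ((1 + X) ^ (p + 1) * (1 - X) ^ q) := by
    rw [Derivation.leibniz, deriv_succ_a, deriv_succ_b]
    simp [smul_eq_mul, C_two]
    ring
  unfold opT
  rw [e, deriv_C_mul, Derivation.leibniz, deriv_succ_a]
  have hb := deriv_b q
  simp only [smul_eq_mul]
  simp [C_two, C_four] at hb ⊢
  linear_combination (-(2 * ((q : PowerSeries ℚ) + 1) * (1 + X) ^ (p + 1))) * hb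

lemma opT_const (n c : ℚ) : opT n (C c) = C (n * (n - 1) * c) := by
  unfold opT
  simp only [derivative_C, mul_zero, sub_zero, deriv_C_mul, add_zero]
  simp only [← map_mul]
  congr 1; ring

lemma opT_high (n : ℚ) (d : ℕ) (f : PowerSeries ℚ) (hf : ∀ m < d + 2, coeff m f = 0) :
    ∀ m < d, coeff m (opT n f) = 0 := by
  have h1 : ∀ (e : ℕ) (g : PowerSeries ℚ), (∀ m < e + 1, coeff m g = 0) →
      ∀ m < e, coeff m (d⁄dX ℚ g) = 0 := by
    intro e g hg m hm
    rw [coeff_derivative, hg (m + 1) (by omega), zero_mul]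
  have h2 : ∀ (e : ℕ) (g u : PowerSeries ℚ), (∀ m < e, coeff m g = 0) →
      ∀ m < e, coeff m (u * g) = 0 := by
    intro e g u hg m hm
    rw [coeff_mul]
    refine Finset.sum_eq_zero fun p hp => ?_
    rw [Finset.HasAntidiagonal.mem_antidiagonal] at hp
    rw [hg p.2 (by omega), mul_zero]
  have h3 : ∀ m < d + 1, coeff m (C n * f - (1 + X) * d⁄dX ℚ f) = 0 := by
    intro m hm
    rw [map_sub, h2 (d + 2) f (C n) hf m (by omega),
      h2 (d + 1) _ (1 + X) (h1 (d + 1) f hf) m hm, sub_zero]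
  intro m hm
  unfold opT
  rw [map_add, h2 (d + 1) _ _ h3 m (by omega), h2 d _ _ (h1 d _ h3) m hm, add_zero]

/-- Analytic core of the Mallows-Sloane bound. -/
lemma mallows_core {α : Type*} (s : Finset α) (wt : α → ℕ) (k : ℕ) (hk : 0 < k) (N : ℚ)
    (hN : N ≠ 0) (z : α) (hz : z ∈ s) (hz0 : wt z = 0)
    (hle : ∀ c ∈ s, wt c ≤ 24 * k)
    (h4 : ∀ c ∈ s, 4 ∣ wt c)
    (hlow : ∀ c ∈ s, c ≠ z → 4 * k + 8 ≤ wt c)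
    (hhigh : ∀ c ∈ s, wt c = 24 * k ∨ wt c + (4 * k + 8) ≤ 24 * k)
    (hmac : ∑ c ∈ s, ((1 + X) ^ (24 * k - wt c) * (1 - X) ^ (wt c) : PowerSeries ℚ) =
      C N * ∑ c ∈ s, X ^ (wt c)) : False := by
  classical
  have h := congrArg (fun f => coeff (4 * k - 2) (opT ((24 * k : ℕ) : ℚ) f * serE k)) hmac
  rw [opT_sum, Finset.sum_mul, map_sum, Finset.sum_eq_zero] at h
  · rw [← Finset.add_sum_erase s _ hz, hz0, pow_zero, mul_add, mul_one, opT_add, opT_const,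
      add_mul, map_add, coeff_C_mul] at h
    have hrest : coeff (4 * k - 2) (opT ((24 * k : ℕ) : ℚ)
        (C N * ∑ c ∈ s.erase z, X ^ (wt c)) * serE k) = 0 := by
      have hh : ∀ m < 4 * k + 6 + 2, coeff m (C N * ∑ c ∈ s.erase z, X ^ (wt c)) = 0 := by
        intro m hm
        rw [coeff_C_mul, map_sum, Finset.sum_eq_zero, mul_zero]
        intro c hc
        rw [Finset.mem_erase] at hc
        rw [coeff_X_pow, if_neg]
        have := hlow c hc.2 hc.1
        omega
      have := opT_high ((24 * k : ℕ) : ℚ) _ _ hh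
      rw [coeff_mul]
      refine Finset.sum_eq_zero fun p hp => ?_
      rw [Finset.HasAntidiagonal.mem_antidiagonal] at hp
      rw [this p.1 (by omega), zero_mul]
    rw [hrest, add_zero] at h
    have h5 := test_const k hk
    have hk1 : (1 : ℚ) ≤ k := by exact_mod_cast hk
    have h6 : ((24 * k : ℕ) : ℚ) * (((24 * k : ℕ) : ℚ) - 1) ≠ 0 := by
      push_cast
      apply mul_ne_zero <;> linarith
    exact mul_ne_zero (mul_ne_zero h6 hN) h5.ne' h.symm
  · intro c hc
    have hle' := hle c hc
    by_cases hcz : c = z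
    · subst hcz
      rw [hz0, pow_zero, mul_one, Nat.sub_zero, opT_a]
      simp
    rcases hhigh c hc with h24 | h24
    · rw [h24, Nat.sub_self, pow_zero, one_mul, opT_b _ (by omega)]
      simp
    · have hl := hlow c hc hcz
      obtain ⟨q, hq⟩ : ∃ q, wt c = q + 1 := ⟨wt c - 1, by omega⟩
      obtain ⟨p, hp⟩ : ∃ p, 24 * k - wt c = p + 1 := ⟨24 * k - wt c - 1, by omega⟩
      rw [hp, hq, opT_ab (24 * k) p q (by omega), mul_assoc, coeff_C_mul,
        test_middle k p q hk (by omega) (hq ▸ h4 c hc) (by omega) (by omega), mul_zero]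

end seriesPart

end Z4Note

namespace Z4Note

section codePart

variable {n : ℕ}

/-- sign character of `ZMod 2` in a commutative ring -/
def sgn (R : Type*) [CommRing R] (a : ZMod 2) : R := if a = 0 then 1 else -1

lemma sgn_add (R : Type*) [CommRing R] (a b : ZMod 2) : sgn R (a + b) = sgn R a * sgn R b := by
  unfold sgn
  have h : ∀ a : ZMod 2, a = 0 ∨ a = 1 := by decide
  have h1 : (1 : ZMod 2) + 1 = 0 := by decide
  rcases h a with rfl | rfl <;> rcases h b with rfl | rfl <;> simp [h1]

lemma sgn_sum (R : Type*) [CommRing R] {α : Type*} (s : Finset α) (f : α → ZMod 2) :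
    sgn R (∑ i ∈ s, f i) = ∏ i ∈ s, sgn R (f i) := by
  classical
  induction s using Finset.induction_on with
  | empty => simp [sgn]
  | insert a s ha ih => rw [Finset.sum_insert ha, Finset.prod_insert ha, sgn_add, ih]

lemma hWt_le (x : Fin n → ZMod 2) : hWt x ≤ n := by
  unfold hWt
  exact (Finset.card_le_univ _).trans (by simp)

lemma prod_sgn (R : Type*) [CommRing R] (w : R) (c : Fin n → ZMod 2) :
    ∏ i, (1 + sgn R (c i) * w) = (1 + w) ^ (n - hWt c) * (1 - w) ^ (hWt c) := by
  have h : ∀ i, (1 + sgn R (c i) * w) = if c i ≠ 0 then (1 - w) else (1 + w) := by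
    intro i
    unfold sgn
    by_cases hc : c i = 0 <;> simp [hc, sub_eq_add_neg]
  simp_rw [h]
  rw [Finset.prod_ite, Finset.prod_const, Finset.prod_const, mul_comm]
  congr 2
  have := Finset.card_filter_add_card_filter_not (s := (Finset.univ : Finset (Fin n)))
    (fun i => c i ≠ 0)
  rw [Finset.card_univ, Fintype.card_fin] at this
  unfold hWt
  omega

lemma prod_sgn' (R : Type*) [CommRing R] (w : R) (c : Fin n → ZMod 2) :
    ∏ i, (1 + sgn R (c i) * w) = ∑ x : Fin n → ZMod 2, sgn R (∑ i, x i * c i) * w ^ (hWt x) := by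
  have h1 : ∀ i, (1 + sgn R (c i) * w) =
      ∑ a : ZMod 2, sgn R (a * c i) * (if a ≠ 0 then w else 1) := by
    intro i
    rw [show (Finset.univ : Finset (ZMod 2)) = {0, 1} by decide]
    rw [Finset.sum_pair (by decide)]
    simp [sgn]
  simp_rw [h1]
  rw [Finset.prod_univ_sum, Fintype.piFinset_univ]
  refine Finset.sum_congr rfl fun x _ => ?_
  rw [Finset.prod_mul_distrib, sgn_sum]
  congr 1
  rw [Finset.prod_ite, Finset.prod_const, Finset.prod_const_one, mul_one]
  rfl

open Classical in
/-- MacWilliams identity. -/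
lemma macwilliams (R : Type*) [CommRing R] [NoZeroDivisors R] (htwo : (2 : R) ≠ 0) (w : R)
    (D : Submodule (ZMod 2) (Fin n → ZMod 2)) :
    ∑ c ∈ Finset.univ.filter (· ∈ D), (1 + w) ^ (n - hWt c) * (1 - w) ^ (hWt c) =
      ((Finset.univ.filter (· ∈ D)).card : R) *
        ∑ x ∈ Finset.univ.filter (· ∈ dual2 (D : Set (Fin n → ZMod 2))), w ^ (hWt x) := by
  simp_rw [← prod_sgn, prod_sgn']
  rw [Finset.sum_comm, Finset.mul_sum, Finset.sum_filter]
  refine Finset.sum_congr rfl fun x _ => ?_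
  rw [← Finset.sum_mul]
  split_ifs with hx
  · congr 1
    rw [Finset.sum_congr rfl (g := fun _ => (1 : R))]
    · simp
    · intro c hc
      rw [Finset.mem_filter] at hc
      rw [hx c hc.2]
      simp [sgn]
  · simp only [dual2, Set.mem_ofPred_eq, not_forall] at hx
    obtain ⟨y, hy, hxy⟩ := hx
    have hs : ∑ c ∈ Finset.univ.filter (· ∈ D), sgn R (∑ i, x i * c i) =
        ∑ c ∈ Finset.univ.filter (· ∈ D), - sgn R (∑ i, x i * c i) := by
      refine Finset.sum_bij' (fun c _ => c + y) (fun c _ => c - y) ?_ ?_ ?_ ?_ ?_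
      · intro c hc
        simp only [Finset.mem_filter, Finset.mem_univ, true_and] at hc ⊢
        exact D.add_mem hc hy
      · intro c hc
        simp only [Finset.mem_filter, Finset.mem_univ, true_and] at hc ⊢
        exact D.sub_mem hc hy
      · intro c _; simp
      · intro c _; simp
      · intro c _
        have : ∑ i, x i * (c + y) i = ∑ i, x i * c i + ∑ i, x i * y i := by
          rw [← Finset.sum_add_distrib]
          exact Finset.sum_congr rfl fun i _ => by simp [mul_add]
        rw [this, sgn_add]
        have h2 : sgn R (∑ i, x i * y i) = -1 := by simp [sgn, hxy]
        rw [h2]; ring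
    rw [Finset.sum_neg_distrib, eq_neg_iff_add_eq_zero, ← two_mul] at hs
    rcases mul_eq_zero.mp hs with h | h
    · exact absurd h htwo
    · rw [h, zero_mul]

/-- size of the intersection of supports -/
def inter (x y : Fin n → ZMod 2) : ℕ := (Finset.univ.filter fun i => x i ≠ 0 ∧ y i ≠ 0).card

lemma hWt_add (x y : Fin n → ZMod 2) : hWt (x + y) + 2 * inter x y = hWt x + hWt y := by
  unfold hWt inter
  simp only [Finset.card_filter, Finset.mul_sum, ← Finset.sum_add_distrib]
  refine Finset.sum_congr rfl fun i _ => ?_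
  rw [Pi.add_apply]
  generalize x i = a
  generalize y i = b
  revert a b
  decide

lemma inter_cast (x y : Fin n → ZMod 2) : ((inter x y : ℕ) : ZMod 2) = ∑ i, x i * y i := by
  unfold inter
  rw [Finset.card_filter]
  push_cast
  refine Finset.sum_congr rfl fun i _ => ?_
  generalize x i = a
  generalize y i = b
  revert a b
  decide

lemma inter_even (x y : Fin n → ZMod 2) : (∑ i, x i * y i = 0) ↔ 2 ∣ inter x y := by
  rw [← inter_cast, ZMod.natCast_eq_zero_iff]

lemma hWt_zero : hWt (0 : Fin n → ZMod 2) = 0 := by simp [hWt]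

lemma hWt_one : hWt (1 : Fin n → ZMod 2) = n := by simp [hWt]

lemma hWt_pos {x : Fin n → ZMod 2} (hx : x ≠ 0) : 0 < hWt x := by
  unfold hWt
  rw [Finset.card_pos]
  obtain ⟨i, hi⟩ := Function.ne_iff.mp hx
  exact ⟨i, by simpa using hi⟩

lemma inter_one (x : Fin n → ZMod 2) : inter x 1 = hWt x := by simp [inter, hWt]

lemma self_orth {D : Submodule (ZMod 2) (Fin n → ZMod 2)}
    (hD : DoublyEven (D : Set (Fin n → ZMod 2))) :
    ∀ x ∈ D, x ∈ dual2 (D : Set (Fin n → ZMod 2)) := by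
  intro x hx y hy
  rw [inter_even]
  have h1 := hWt_add x y
  have h2 := hD x hx
  have h3 := hD y hy
  have h4 := hD (x + y) (D.add_mem hx hy)
  omega

lemma doublyEven_sup {D : Submodule (ZMod 2) (Fin n → ZMod 2)}
    (hD : DoublyEven (D : Set (Fin n → ZMod 2))) (x : Fin n → ZMod 2)
    (hx : x ∈ dual2 (D : Set (Fin n → ZMod 2))) (hx4 : 4 ∣ hWt x) :
    DoublyEven ((D ⊔ Submodule.span (ZMod 2) {x} : Submodule (ZMod 2) (Fin n → ZMod 2)) :
      Set (Fin n → ZMod 2)) := by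
  intro z hz
  rw [SetLike.mem_coe, Submodule.mem_sup] at hz
  obtain ⟨d, hd, y, hy, rfl⟩ := hz
  rw [Submodule.mem_span_singleton] at hy
  obtain ⟨a, rfl⟩ := hy
  have h : ∀ a : ZMod 2, a = 0 ∨ a = 1 := by decide
  rcases h a with rfl | rfl
  · simpa using hD d hd
  · rw [one_smul, add_comm]
    have h1 := hWt_add x d
    have h2 := (inter_even x d).mp (hx d hd)
    have h3 := hD d hd
    omega

lemma gauss_pow (k w : ℕ) (hw : w ≤ 24 * k) (h4 : 4 ∣ w) :
    ((1 + Complex.I) ^ (24 * k - w) * (1 - Complex.I) ^ w : ℂ) = 4 ^ (6 * k) := by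
  obtain ⟨j, rfl⟩ := h4
  obtain ⟨m, hm⟩ : ∃ m, m + j = 6 * k := ⟨6 * k - j, by omega⟩
  have hI := Complex.I_sq
  have h1 : (1 + Complex.I) ^ 4 = -4 := by
    linear_combination (Complex.I ^ 2 + 4 * Complex.I + 5) * hI
  have h2 : (1 - Complex.I) ^ 4 = -4 := by
    linear_combination (Complex.I ^ 2 - 4 * Complex.I + 5) * hI
  rw [show 24 * k - 4 * j = 4 * m by omega, pow_mul, pow_mul, h1, h2, ← pow_add, hm]
  exact Even.neg_pow ⟨3 * k, by ring⟩ 4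

/-- Every doubly even code of length `24k` is contained in a doubly even self-dual code. -/
lemma exists_selfDual (k : ℕ) (D₀ : Submodule (ZMod 2) (Fin (24 * k) → ZMod 2))
    (hD₀ : DoublyEven (D₀ : Set (Fin (24 * k) → ZMod 2))) :
    ∃ D : Submodule (ZMod 2) (Fin (24 * k) → ZMod 2), D₀ ≤ D ∧ SelfDual2 D ∧
      DoublyEven (D : Set (Fin (24 * k) → ZMod 2)) := by
  classical
  have hfin : Set.Finite {D : Submodule (ZMod 2) (Fin (24 * k) → ZMod 2) |
      DoublyEven (D : Set (Fin (24 * k) → ZMod 2))} := Set.toFinite _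
  obtain ⟨D, hle, hmax⟩ := hfin.exists_le_maximal hD₀
  have hD := hmax.prop
  simp only [Set.mem_ofPred_eq] at hD
  refine ⟨D, hle, ?_, hD⟩
  have hso := self_orth hD
  have hkey : ∀ x ∈ dual2 (D : Set (Fin (24 * k) → ZMod 2)), 4 ∣ hWt x → x ∈ D := by
    intro x hx h4
    have := hmax.le_of_ge (doublyEven_sup hD x hx h4) le_sup_left
    exact this (Submodule.mem_sup_right (Submodule.mem_span_singleton_self x))
  have hone : (1 : Fin (24 * k) → ZMod 2) ∈ D := by
    apply hkey
    · intro y hy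
      have h1 := (inter_even y 1).mpr (by rw [inter_one]; have := hD y hy; omega)
      simpa [mul_comm] using h1
    · rw [hWt_one]; omega
  have heven : ∀ x ∈ dual2 (D : Set (Fin (24 * k) → ZMod 2)), x ∉ D → hWt x % 4 = 2 := by
    intro x hx hxD
    have h1 := (inter_even x 1).mp (hx 1 hone)
    rw [inter_one] at h1
    have h2 : ¬ 4 ∣ hWt x := fun h => hxD (hkey x hx h)
    omega
  have hmac := macwilliams ℂ two_ne_zero Complex.I D
  set S := Finset.univ.filter (· ∈ D) with hS
  set T := Finset.univ.filter (· ∈ dual2 (D : Set (Fin (24 * k) → ZMod 2))) with hT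
  have hST : S ⊆ T := by
    intro x hx
    simp only [hS, hT, Finset.mem_filter, Finset.mem_univ, true_and] at hx ⊢
    exact hso x hx
  have hL : ∑ c ∈ S, ((1 + Complex.I) ^ (24 * k - hWt c) * (1 - Complex.I) ^ (hWt c) : ℂ) =
      S.card * 4 ^ (6 * k) := by
    rw [Finset.sum_congr rfl (g := fun _ => (4 : ℂ) ^ (6 * k))]
    · simp
    · intro c hc
      simp only [hS, Finset.mem_filter, Finset.mem_univ, true_and] at hc
      exact gauss_pow k _ (hWt_le c) (hD c hc)
  have hR : ∑ x ∈ T, (Complex.I ^ (hWt x) : ℂ) = S.card - (T \ S).card := by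
    rw [← Finset.sum_sdiff hST]
    have e1 : ∑ x ∈ S, (Complex.I ^ (hWt x) : ℂ) = S.card := by
      rw [Finset.sum_congr rfl (g := fun _ => (1 : ℂ))]
      · simp
      · intro c hc
        simp only [hS, Finset.mem_filter, Finset.mem_univ, true_and] at hc
        obtain ⟨j, hj⟩ := hD c hc
        rw [hj, pow_mul, Complex.I_pow_four, one_pow]
    have e2 : ∑ x ∈ T \ S, (Complex.I ^ (hWt x) : ℂ) = - (T \ S).card := by
      rw [Finset.sum_congr rfl (g := fun _ => (-1 : ℂ))]
      · simp
      · intro c hc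
        simp only [hS, hT, Finset.mem_sdiff, Finset.mem_filter, Finset.mem_univ, true_and] at hc
        have := heven c hc.1 hc.2
        rw [← Nat.div_add_mod (hWt c) 4, this, pow_add, pow_mul, Complex.I_pow_four, one_pow,
          Complex.I_sq, one_mul]
    rw [e1, e2]; ring
  rw [hL, hR] at hmac
  have hScard : 0 < S.card := Finset.card_pos.mpr ⟨0, by simp [hS]⟩
  have hmac2 : (4 : ℂ) ^ (6 * k) = S.card - (T \ S).card :=
    mul_left_cancel₀ (by exact_mod_cast hScard.ne') hmac
  have hlt : (T \ S).card < S.card := by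
    have h1 : ((4 ^ (6 * k) + (T \ S).card : ℕ) : ℂ) = ((S.card : ℕ) : ℂ) := by
      push_cast
      rw [hmac2]; ring
    have h2 := Nat.cast_injective h1
    have h3 : 0 < 4 ^ (6 * k) := by positivity
    omega
  unfold SelfDual2
  apply Set.Subset.antisymm
  · exact fun x hx => hso x hx
  · intro x hx
    by_contra hxD
    have : S.card ≤ (T \ S).card := by
      refine Finset.card_le_card_of_injOn (fun c => x + c) ?_ ?_
      · intro c hc
        simp only [hS, hT, Finset.coe_filter, Finset.mem_coe, Finset.mem_sdiff, Finset.mem_filter,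
          Finset.mem_univ, true_and, Set.mem_ofPred_eq] at hc ⊢
        refine ⟨?_, ?_⟩
        · intro y hy
          have h1 := hx y hy
          have h2 := hso c hc y hy
          simp only [Pi.add_apply, add_mul, Finset.sum_add_distrib, h1, h2, add_zero]
        · intro h
          apply hxD
          have := D.sub_mem h hc
          simpa using this
      · intro a _ b _ h
        simpa using h
    omega

/-- Mallows-Sloane bound. -/
lemma mallows_sloane (k : ℕ) (hk : 0 < k) (D : Submodule (ZMod 2) (Fin (24 * k) → ZMod 2))
    (hsd : SelfDual2 D) (hD : DoublyEven (D : Set (Fin (24 * k) → ZMod 2)))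
    (hlow : ∀ x ∈ D, x ≠ 0 → 4 * k + 8 ≤ hWt x) : False := by
  classical
  have hone : (1 : Fin (24 * k) → ZMod 2) ∈ D := by
    rw [← SetLike.mem_coe, hsd]
    intro y hy
    have h1 := (inter_even y 1).mpr (by rw [inter_one]; have := hD y hy; omega)
    simpa [mul_comm] using h1
  have htwo : (2 : PowerSeries ℚ) ≠ 0 := by
    intro h
    rw [← C_two] at h
    have := congrArg (PowerSeries.coeff 0) h
    simp at this
  have hmac := macwilliams (PowerSeries ℚ) htwo PowerSeries.X D
  rw [← hsd] at hmac
  refine mallows_core (Finset.univ.filter (· ∈ D)) hWt k hk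
    ((Finset.univ.filter (· ∈ D)).card : ℚ) ?_ 0 (by simp) hWt_zero ?_ ?_ ?_ ?_ ?_
  · have : 0 < (Finset.univ.filter (· ∈ D)).card := Finset.card_pos.mpr ⟨0, by simp⟩
    exact_mod_cast this.ne'
  · intro c _; exact hWt_le c
  · intro c hc; exact hD c (by simpa using hc)
  · intro c hc h0; exact hlow c (by simpa using hc) h0
  · intro c hc
    have hc' : c ∈ D := by simpa using hc
    have h1 := hWt_add c 1
    rw [inter_one, hWt_one] at h1
    by_cases h0 : c + 1 = 0
    · rw [h0, hWt_zero] at h1; omega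
    · have := hlow _ (D.add_mem hc' hone) h0
      omega
  · rw [map_natCast]
    exact hmac

/-- the residue code as a submodule -/
def resCode (C : Submodule (ZMod 4) (Fin n → ZMod 4)) : Submodule (ZMod 2) (Fin n → ZMod 2) where
  carrier := residue (C : Set (Fin n → ZMod 4))
  zero_mem' := ⟨0, C.zero_mem, by funext i; simp [res2]⟩
  add_mem' := by
    rintro _ _ ⟨a, ha, rfl⟩ ⟨b, hb, rfl⟩
    exact ⟨a + b, C.add_mem ha hb, by funext i; simp [res2]⟩
  smul_mem' := by
    rintro c _ ⟨a, ha, rfl⟩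
    have h : ∀ a : ZMod 2, a = 0 ∨ a = 1 := by decide
    rcases h c with rfl | rfl
    · exact ⟨0, C.zero_mem, by funext i; simp [res2]⟩
    · exact ⟨a, ha, by simp⟩

lemma resCode_doublyEven (C : Submodule (ZMod 4) (Fin n → ZMod 4)) (hsd : SelfDualZ4 C) :
    DoublyEven (resCode C : Set (Fin n → ZMod 2)) := by
  rintro _ ⟨a, ha, rfl⟩
  have h1 : a ∈ dualZ4 (C : Set (Fin n → ZMod 4)) := hsd ▸ ha
  have h2 := h1 a ha
  rw [← ZMod.natCast_eq_zero_iff, ← h2]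
  unfold hWt
  rw [Finset.card_filter]
  push_cast
  refine Finset.sum_congr rfl fun i _ => ?_
  unfold res2
  generalize a i = b
  revert b
  decide

/-- the lift `2x` -/
def lift2 (x : Fin n → ZMod 2) : Fin n → ZMod 4 := fun i => if x i = 0 then 0 else 2

lemma lift2_mem (C : Submodule (ZMod 4) (Fin n → ZMod 4)) (hsd : SelfDualZ4 C)
    (x : Fin n → ZMod 2) (hx : x ∈ dual2 (residue (C : Set (Fin n → ZMod 4)))) :
    lift2 x ∈ C := by
  rw [← SetLike.mem_coe, hsd]
  intro y hy
  have h1 := hx (res2 y) ⟨y, hy, rfl⟩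
  rw [inter_even] at h1
  obtain ⟨m, hm⟩ := h1
  have h2 : ∑ i, lift2 x i * y i = ((2 * inter x (res2 y) : ℕ) : ZMod 4) := by
    unfold inter lift2 res2
    rw [Finset.card_filter]
    push_cast
    rw [Finset.mul_sum]
    refine Finset.sum_congr rfl fun i _ => ?_
    generalize x i = a
    generalize y i = b
    revert a b
    decide
  rw [h2, hm, ZMod.natCast_eq_zero_iff]
  omega

lemma leeWt_lift2 (x : Fin n → ZMod 2) : leeWt (lift2 x) = 2 * hWt x := by
  unfold leeWt hWt lift2
  rw [Finset.card_filter, Finset.mul_sum]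
  refine Finset.sum_congr rfl fun i _ => ?_
  generalize x i = a
  revert a
  decide

lemma minLee_le (k : ℕ) (hk : 0 < k)
    (hno : ¬ ∃ D : Submodule (ZMod 2) (Fin (24 * k) → ZMod 2),
        SelfDual2 D ∧ DoublyEven (D : Set (Fin (24 * k) → ZMod 2)) ∧
        minHam (D : Set (Fin (24 * k) → ZMod 2)) = 4 * k + 4)
    (C : Submodule (ZMod 4) (Fin (24 * k) → ZMod 4)) (hsd : SelfDualZ4 C) :
    minLee (C : Set (Fin (24 * k) → ZMod 4)) ≤ 8 * k := by
  by_contra! hlt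
  obtain ⟨D, hle, hDsd, hD⟩ := exists_selfDual k (resCode C) (resCode_doublyEven C hsd)
  have hw : ∀ x ∈ D, x ≠ 0 → 4 * k + 4 ≤ hWt x := by
    intro x hx h0
    have hmem : lift2 x ∈ C := by
      apply lift2_mem C hsd
      intro y hy
      exact self_orth hD x hx y (hle hy)
    have hpos := hWt_pos h0
    have hne : lift2 x ≠ 0 := by
      intro h
      have h1 := leeWt_lift2 x
      rw [h] at h1
      simp [leeWt, leeVal] at h1
      omega
    have h1 : minLee (C : Set (Fin (24 * k) → ZMod 4)) ≤ 2 * hWt x :=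
      Nat.sInf_le ⟨lift2 x, hmem, hne, leeWt_lift2 x⟩
    have h4 := hD x hx
    omega
  apply mallows_sloane k hk D hDsd hD
  intro x hx h0
  have h1 := hw x hx h0
  have h4 := hD x hx
  have h5 : hWt x ≠ 4 * k + 4 := by
    intro h
    apply hno
    refine ⟨D, hDsd, hD, le_antisymm (Nat.sInf_le ⟨x, hx, h0, h⟩) ?_⟩
    refine le_csInf ⟨4 * k + 4, ⟨x, hx, h0, h⟩⟩ ?_
    rintro d ⟨y, hy, hy0, rfl⟩
    exact hw y hy hy0
  omega

end codePart

end Z4Note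

open Z4Note in
/-- if there is no binary extremal doubly even self-dual code of length
`24k`, then no self-dual `ZMod 4`-code of length `24k` has minimum Lee weight `8k+2`
or `8k+4`, and (with Rains's bound) its minimum Lee weight is at most `8k`. -/
theorem minLee_le_of_no_extremal_length24k
    (k : ℕ) (hk : 0 < k)
    (hno : ¬ ∃ D : Submodule (ZMod 2) (Fin (24 * k) → ZMod 2),
        SelfDual2 D ∧ DoublyEven (D : Set (Fin (24 * k) → ZMod 2)) ∧
        minHam (D : Set (Fin (24 * k) → ZMod 2)) = 4 * k + 4)
    (C : Submodule (ZMod 4) (Fin (24 * k) → ZMod 4)) (hsd : SelfDualZ4 C) :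
    (minLee (C : Set (Fin (24 * k) → ZMod 4)) ≠ 8 * k + 2 ∧
     minLee (C : Set (Fin (24 * k) → ZMod 4)) ≠ 8 * k + 4) ∧
    minLee (C : Set (Fin (24 * k) → ZMod 4)) ≤ 8 * k := by
  have h := minLee_le k hk hno C hsd
  exact ⟨⟨by omega, by omega⟩, h⟩
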